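/- For all real numbers a, b, α, β with (a,b) ≠ (0,0), writing s = a² + b², one has E₁(a/s, b/s, −α, β) = −s⁻³·E₁(a, b, α, β). In particular the zero set of E₁ is invariant under the transformation (a, b, α, β) ↦ (a/(a²+b²), b/(a²+b²), −α, β). -/

import Mathlib

/-- The imaginary part of the equation cutting out the discriminant locus of the Fermat
cubic, in coordinates `x₁ = a cos α`, `x₂ = a sin α`, `x₃ = b cos β`, `x₄ = b sin β`. -/
noncomputable def E₁ (a b α β : ℝ) : ℝ :=
  -2 * a ^ 3 * Real.cos (3 * β) * Real.sin (3 * α) +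
    (-1 + a ^ 6 + 3 * a ^ 4 * b ^ 2 + 3 * a ^ 2 * b ^ 4 + b ^ 6) * Real.sin (3 * β)

/-!
In `E₁` the coefficient of `sin (3β)` is `s ^ 3 - 1` with `s = a ^ 2 + b ^ 2`, and the inversion
replaces `s` by `s⁻¹`; since `s⁻³ - 1 = -s⁻³ (s ^ 3 - 1)`, this term is scaled by `-s⁻³`. The other
term is cubic in `a`, so it is scaled by `s⁻³`, and `α ↦ -α` supplies the missing sign.
-/

theorem div_sq_add_div_sq_eq_inv_sq_add_sq {K : Type*} [Semifield K] (a b : K) :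
    (a / (a ^ 2 + b ^ 2)) ^ 2 + (b / (a ^ 2 + b ^ 2)) ^ 2 = (a ^ 2 + b ^ 2)⁻¹ := by
  rw [div_pow, div_pow, ← add_div, sq (a ^ 2 + b ^ 2), div_self_mul_self']

theorem E₁_eq_sq_add_sq_pow_three (a b α β : ℝ) :
    E₁ a b α β = ((a ^ 2 + b ^ 2) ^ 3 - 1) * Real.sin (3 * β) -
      2 * a ^ 3 * Real.cos (3 * β) * Real.sin (3 * α) := by
  unfold E₁
  ring

theorem E₁_div_sq_add_sq_neg {a b : ℝ} (hs : a ^ 2 + b ^ 2 ≠ 0) (α β : ℝ) :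
    E₁ (a / (a ^ 2 + b ^ 2)) (b / (a ^ 2 + b ^ 2)) (-α) β =
      -((a ^ 2 + b ^ 2) ^ 3)⁻¹ * E₁ a b α β := by
  have radial : ((a / (a ^ 2 + b ^ 2)) ^ 2 + (b / (a ^ 2 + b ^ 2)) ^ 2) ^ 3 - 1 =
      -((a ^ 2 + b ^ 2) ^ 3)⁻¹ * ((a ^ 2 + b ^ 2) ^ 3 - 1) := by
    rw [div_sq_add_div_sq_eq_inv_sq_add_sq, inv_pow, neg_mul, mul_sub,
      inv_mul_cancel₀ (pow_ne_zero 3 hs), mul_one, neg_sub]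
  have angular : (a / (a ^ 2 + b ^ 2)) ^ 3 * Real.sin (3 * -α) =
      -((a ^ 2 + b ^ 2) ^ 3)⁻¹ * (a ^ 3 * Real.sin (3 * α)) := by
    rw [div_pow, mul_neg, Real.sin_neg]
    ring
  rw [E₁_eq_sq_add_sq_pow_three, E₁_eq_sq_add_sq_pow_three, radial]
  linear_combination -2 * Real.cos (3 * β) * angular

/-- For `(a,b) ≠ (0,0)` and `s = a² + b²` one has
`E₁(a/s, b/s, −α, β) = −s⁻³·E₁(a, b, α, β)`; in particular the zero set of `E₁` is
invariant under `(a, b, α, β) ↦ (a/(a²+b²), b/(a²+b²), −α, β)`. -/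
theorem E₁_inversion_neg_alpha (a b α β : ℝ) (h : (a, b) ≠ (0, 0)) :
    E₁ (a / (a ^ 2 + b ^ 2)) (b / (a ^ 2 + b ^ 2)) (-α) β =
      -((a ^ 2 + b ^ 2) ^ 3)⁻¹ * E₁ a b α β ∧
    (E₁ a b α β = 0 → E₁ (a / (a ^ 2 + b ^ 2)) (b / (a ^ 2 + b ^ 2)) (-α) β = 0) := by
  have hs : a ^ 2 + b ^ 2 ≠ 0 := by
    contrapose! h
    rwa [sq, sq, mul_self_add_mul_self_eq_zero, ← Prod.mk_inj] at h
  have scaling := E₁_div_sq_add_sq_neg hs α β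
  exact ⟨scaling, fun vanishes => by rw [scaling, vanishes, mul_zero]⟩
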